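/- arXiv:2408.14046 — 2 statements merged into one kernel-verified Lean document; each statement's English description precedes it below -/
import Mathlib

section
/- Let ℓ be an odd prime, q a prime power coprime to ℓ, t the multiplicative order of q modulo ℓ, n a positive integer, and μ ∈ 𝔛_n. For f ∈ Φ set h_f = gcd(d(f), t). Then v_ℓ(a_μ) ≥ v_ℓ( ⌊n/t⌋! / ∏_{f ∈ Φ} ⌊ |μ(f)|·h_f / t ⌋! ), where a_μ = (∏_{i=1}^{n} (q^i − 1)) / (∏_{f ∈ Φ} ∏_{i=1}^{|μ(f)|} (q^{d(f)·i} − 1)). -/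
/-- The `i`-th part (0-indexed, parts in weakly decreasing order) of the partition whose
multiset of parts is `lam`; `0` if `i` is at least the number of parts. -/
def partNth (lam : Multiset ℕ) (i : ℕ) : ℕ :=
  ((lam.sort (· ≤ ·)).reverse.getD i 0)

/-- The `j`-th part (0-indexed) of the conjugate partition: the number of parts `> j`. -/
def conjNth (lam : Multiset ℕ) (j : ℕ) : ℕ :=
  (lam.filter (fun m => j < m)).card

/-- The cells `(i, j)` (0-indexed) of the Young diagram of `lam`. -/
def cellsOf (lam : Multiset ℕ) : Finset (ℕ × ℕ) :=
  (Finset.range (Multiset.card lam) ×ˢ Finset.range lam.sum).filter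
    (fun c => c.2 < partNth lam c.1)

/-- The hook length of the cell `c = (i, j)` of `lam`:
`(λᵢ − j) + (λ'ⱼ − i) − 1`. -/
def hookLen (lam : Multiset ℕ) (c : ℕ × ℕ) : ℕ :=
  (partNth lam c.1 - c.2) + (conjNth lam c.2 - c.1) - 1

/-- The product of all hook lengths of `lam`. -/
def hookProd (lam : Multiset ℕ) : ℕ :=
  ∏ c ∈ cellsOf lam, hookLen lam c

/-- `α(λ) = Σᵢ (i − 1)·λᵢ` (1-indexed), i.e. `Σᵢ i·λᵢ` for the 0-indexed parts. -/
def alphaStat (lam : Multiset ℕ) : ℕ :=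
  ∑ i ∈ Finset.range (Multiset.card lam), i * partNth lam i

/-- `𝔣_λ = n! / ∏_{h ∈ H(λ)} |h|`, the degree of the irreducible character of `S_n`
indexed by `λ`, as a rational number. -/
def fDeg (lam : Multiset ℕ) : ℚ :=
  (Nat.factorial lam.sum : ℚ) / (hookProd lam : ℚ)

/-- `d_λ(x) = x^{α(λ)} · ∏_{i=1}^{n} (x^i − 1) / ∏_{h ∈ H(λ)} (x^{|h|} − 1)`. -/
def dDeg (lam : Multiset ℕ) (x : ℕ) : ℚ :=
  (x : ℚ) ^ alphaStat lam * (∏ i ∈ Finset.Icc 1 lam.sum, ((x : ℚ) ^ i - 1)) /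
    ∏ c ∈ cellsOf lam, ((x : ℚ) ^ hookLen lam c - 1)
/-- `μ` is a member of `𝔛_n`: a finitely supported assignment of a partition (given by its
multiset of positive parts) to each monic irreducible polynomial `f ≠ x` over `F`, such that
`Σ_f |μ(f)|·deg f = n`. -/
def IsXn (F : Type*) [Field F] (n : ℕ) (μ : Polynomial F →₀ Multiset ℕ) : Prop :=
  (∀ f ∈ μ.support, f.Monic ∧ Irreducible f ∧ f ≠ Polynomial.X) ∧
  (∀ f : Polynomial F, ∀ m ∈ μ f, 0 < m) ∧
  (μ.sum fun f lam => lam.sum * f.natDegree) = n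

/-- `a_μ = ∏_{i=1}^{n} (q^i − 1) / ∏_{f ∈ Φ} ∏_{i=1}^{|μ(f)|} (q^{d(f)·i} − 1)`. -/
noncomputable def aMu (q : ℕ) {F : Type*} [Field F] (n : ℕ)
    (μ : Polynomial F →₀ Multiset ℕ) : ℚ :=
  (∏ i ∈ Finset.Icc 1 n, ((q : ℚ) ^ i - 1)) /
    ∏ f ∈ μ.support, ∏ i ∈ Finset.Icc 1 (μ f).sum, ((q : ℚ) ^ (f.natDegree * i) - 1)

/-- `ψ_m(x) = ∏_{i=1}^{m} (x^i − 1)`. -/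
def psiPoly (m : ℕ) (x : ℚ) : ℚ := ∏ i ∈ Finset.Icc 1 m, (x ^ i - 1)

/-- `H(λ, x) = x^{α(λ)} / ∏_{h ∈ H(λ)} (x^{|h|} − 1)`. -/
def hFactor (lam : Multiset ℕ) (x : ℚ) : ℚ :=
  x ^ alphaStat lam / ∏ c ∈ cellsOf lam, (x ^ hookLen lam c - 1)

/-- `d_μ = ψ_n(q) · ∏_{f ∈ Φ} H(μ(f), q^{d(f)})`, the degree of the irreducible character of
`GL(n, q)` indexed by `μ`, as a rational number. -/
noncomputable def dMu (q : ℕ) {F : Type*} [Field F] (n : ℕ)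
    (μ : Polynomial F →₀ Multiset ℕ) : ℚ :=
  psiPoly n (q : ℚ) * ∏ f ∈ μ.support, hFactor (μ f) ((q : ℚ) ^ f.natDegree)

theorem aux_prod (ℓ : ℕ) (hℓ : ℓ.Prime) (hodd : Odd ℓ) (q : ℕ) (hq : 2 ≤ q)
    (hco : Nat.Coprime q ℓ) (t : ℕ) (ht : t = orderOf (q : ZMod ℓ)) (ht0 : 0 < t)
    (d : ℕ) (hd : 0 < d) (m : ℕ) :
    padicValRat ℓ (∏ i ∈ Finset.Icc 1 m, ((q : ℚ) ^ (d * i) - 1)) =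
      ((m * Nat.gcd d t / t : ℕ) : ℤ) *
        ((padicValNat ℓ (q ^ t - 1) : ℤ) + padicValNat ℓ (d / Nat.gcd d t)) +
      padicValRat ℓ (Nat.factorial (m * Nat.gcd d t / t) : ℚ) := by
  have : Fact ℓ.Prime := ⟨hℓ⟩
  have hne : ∀ k, 0 < k → ((q : ℚ) ^ k - 1) ≠ 0 := by
    intro k hk
    have : (1 : ℚ) < (q : ℚ) ^ k := one_lt_pow₀ (by exact_mod_cast hq) hk.ne'
    linarith
  have hcast : ∀ k, ((q : ℚ) ^ k - 1) = ((q ^ k - 1 : ℕ) : ℚ) := by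
    intro k
    rw [Nat.cast_sub (Nat.one_le_pow _ _ (by omega))]
    push_cast; ring
  have hdvd : ∀ k, ℓ ∣ q ^ k - 1 ↔ t ∣ k := by
    intro k
    rw [ht, orderOf_dvd_iff_pow_eq_one, ← ZMod.natCast_eq_zero_iff,
      Nat.cast_sub (Nat.one_le_pow _ _ (by omega))]
    push_cast
    exact sub_eq_zero
  have hlte : ∀ k, 0 < k → padicValNat ℓ (q ^ (t * k) - 1) =
      padicValNat ℓ (q ^ t - 1) + padicValNat ℓ k := by
    intro k hk
    have h := padicValNat.pow_sub_pow (p := ℓ) hodd (x := q ^ t) (y := 1)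
      (Nat.one_lt_pow ht0.ne' (by omega)) ((hdvd t).2 dvd_rfl)
      (fun h => by
        have h1 := hℓ.dvd_of_dvd_pow h
        exact hℓ.one_lt.ne' (Nat.dvd_one.1 (hco ▸ Nat.dvd_gcd h1 dvd_rfl)))
      hk.ne'
    rwa [one_pow, ← pow_mul] at h
  obtain ⟨h, D, s, hh, hcop, hdD, hts⟩ : ∃ h D s, 0 < h ∧ Nat.Coprime D s ∧ d = D * h ∧ t = s * h := by
    obtain ⟨D, s, a, b, c⟩ := Nat.exists_coprime d t
    exact ⟨_, D, s, Nat.gcd_pos_of_pos_left _ hd, a, b, c⟩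
  have hg : Nat.gcd d t = h := by
    rw [hdD, hts, Nat.gcd_mul_right, hcop, one_mul]
  have hD0 : 0 < D := Nat.pos_of_ne_zero (by rintro rfl; simp at hdD; omega)
  have hs0 : 0 < s := Nat.pos_of_ne_zero (by rintro rfl; simp at hts; omega)
  have hK : ∀ m, m * Nat.gcd d t / t = m / s := by
    intro m
    rw [hg, hts, Nat.mul_div_mul_right _ _ hh]
  have hDD : d / Nat.gcd d t = D := by
    rw [hg, hdD, Nat.mul_div_cancel _ hh]
  rw [hK, hDD]
  induction m with
  | zero => simp
  | succ m ih =>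
    rw [Finset.prod_Icc_succ_top (by omega), padicValRat.mul
      (Finset.prod_ne_zero_iff.2 fun i hi => hne _ (Nat.mul_pos hd (Finset.mem_Icc.1 hi).1))
      (hne _ (by positivity)), ih, hcast, padicValRat.of_nat (n := q ^ (d * (m + 1)) - 1)]
    rw [Nat.succ_div]
    have hiff : t ∣ d * (m + 1) ↔ s ∣ m + 1 := by
      rw [hdD, hts, mul_right_comm, Nat.mul_dvd_mul_iff_right hh]
      exact hcop.symm.dvd_mul_left
    by_cases hc : s ∣ m + 1
    · rw [if_pos hc]
      have hk : m + 1 = s * (m / s + 1) := by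
        have := Nat.succ_div (a := m) (b := s)
        rw [if_pos hc] at this
        rw [← this, Nat.mul_div_cancel' hc]
      have e : d * (m + 1) = t * (D * (m / s + 1)) := by
        conv_lhs => rw [hk]
        rw [hdD, hts]; ring
      rw [e, hlte _ (by positivity), padicValNat.mul hD0.ne' (Nat.succ_ne_zero (m / s)),
        Nat.factorial_succ, Nat.cast_mul, padicValRat.mul (by positivity) (by positivity),
        padicValRat.of_nat, padicValRat.of_nat (n := m / s + 1)]
      push_cast
      ring
    · rw [if_neg hc, padicValNat.eq_zero_of_not_dvd (fun h => hc (hiff.1 ((hdvd _).1 h)))]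
      simp

theorem aux_prod_val (p : ℕ) [Fact p.Prime] {ι : Type*} (s : Finset ι) (g : ι → ℚ)
    (hg : ∀ i ∈ s, g i ≠ 0) :
    padicValRat p (∏ i ∈ s, g i) = ∑ i ∈ s, padicValRat p (g i) := by
  classical
  induction s using Finset.induction_on with
  | empty => simp
  | insert a s ha ih =>
    rw [Finset.prod_insert ha, Finset.sum_insert ha, padicValRat.mul
      (hg a (by simp)) (Finset.prod_ne_zero_iff.2 fun i hi => hg i (by simp [hi])),
      ih fun i hi => hg i (by simp [hi])]

theorem ell_adic_valuation_of_aMu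
    (ℓ : ℕ) (hℓ : ℓ.Prime) (hodd : Odd ℓ)
    (q : ℕ) (hq : IsPrimePow q) (hco : Nat.Coprime q ℓ)
    (t : ℕ) (ht : t = orderOf (q : ZMod ℓ))
    (F : Type*) [Field F] [Fintype F] (hFq : Fintype.card F = q)
    (n : ℕ) (hn : 0 < n) (μ : Polynomial F →₀ Multiset ℕ) (hμ : IsXn F n μ) :
    padicValRat ℓ
        ((Nat.factorial (n / t) : ℚ) /
          ∏ f ∈ μ.support,
            (Nat.factorial ((μ f).sum * Nat.gcd f.natDegree t / t) : ℚ)) ≤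
      padicValRat ℓ (aMu q n μ) := by
  have : Fact ℓ.Prime := ⟨hℓ⟩
  obtain ⟨hΦ, -, hsum⟩ := hμ
  have hq2 : 2 ≤ q := hq.two_le
  have hcop := hco
  have ht0 : 0 < t := by
    have hu : IsUnit (q : ZMod ℓ) := (ZMod.isUnit_iff_coprime q ℓ).2 hco
    rw [ht, orderOf_pos_iff]
    exact isOfFinOrder_iff_isUnit.2 hu
  have hne : ∀ k, 0 < k → ((q : ℚ) ^ k - 1) ≠ 0 := by
    intro k hk
    have : (1 : ℚ) < (q : ℚ) ^ k := one_lt_pow₀ (by exact_mod_cast hq2) hk.ne'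
    linarith
  have hdpos : ∀ f ∈ μ.support, 0 < f.natDegree := fun f hf => (hΦ f hf).2.1.natDegree_pos
  have hpne : ∀ f ∈ μ.support,
      (∏ i ∈ Finset.Icc 1 (μ f).sum, ((q : ℚ) ^ (f.natDegree * i) - 1)) ≠ 0 := fun f hf =>
    Finset.prod_ne_zero_iff.2 fun i hi => hne _ (Nat.mul_pos (hdpos f hf) (Finset.mem_Icc.1 hi).1)
  have hfne : ∀ f ∈ μ.support,
      (Nat.factorial ((μ f).sum * Nat.gcd f.natDegree t / t) : ℚ) ≠ 0 := fun f _ => by positivity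
  have hnum := aux_prod ℓ hℓ hodd q hq2 hco t ht ht0 1 one_pos n
  simp only [one_mul, Nat.gcd_one_left, mul_one, Nat.div_one, padicValNat_one_right, Nat.cast_zero,
    add_zero] at hnum
  unfold aMu
  rw [padicValRat.div (by positivity) (Finset.prod_ne_zero_iff.2 hfne),
    padicValRat.div (Finset.prod_ne_zero_iff.2 fun i hi => hne _ (Finset.mem_Icc.1 hi).1)
      (Finset.prod_ne_zero_iff.2 hpne), aux_prod_val _ _ _ hfne, aux_prod_val _ _ _ hpne, hnum,
    Finset.sum_congr rfl (fun f hf =>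
      aux_prod ℓ hℓ hodd q hq2 hco t ht ht0 f.natDegree (hdpos f hf) (μ f).sum),
    Finset.sum_add_distrib]
  have ha : 1 ≤ padicValNat ℓ (q ^ t - 1) := by
    apply one_le_padicValNat_of_dvd
    · have := Nat.one_lt_pow ht0.ne' (show 1 < q by omega)
      omega
    · rw [← ZMod.natCast_eq_zero_iff, Nat.cast_sub (Nat.one_le_pow _ _ (by omega))]
      push_cast
      rw [ht, pow_orderOf_eq_one]; simp
  set a := padicValNat ℓ (q ^ t - 1)
  have key : ∑ f ∈ μ.support, ((μ f).sum * Nat.gcd f.natDegree t / t) *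
      (f.natDegree / Nat.gcd f.natDegree t) ≤ n / t := by
    rw [Nat.le_div_iff_mul_le ht0, ← hsum, Finsupp.sum, Finset.sum_mul]
    apply Finset.sum_le_sum
    intro f hf
    calc _ = ((μ f).sum * Nat.gcd f.natDegree t / t * t) *
          (f.natDegree / Nat.gcd f.natDegree t) := by ring
      _ ≤ ((μ f).sum * Nat.gcd f.natDegree t) * (f.natDegree / Nat.gcd f.natDegree t) :=
        Nat.mul_le_mul_right _ (Nat.div_mul_le_self _ _)
      _ = _ := by rw [mul_assoc, Nat.mul_div_cancel' (Nat.gcd_dvd_left _ _)]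
  have key2 : ∑ f ∈ μ.support, ((μ f).sum * Nat.gcd f.natDegree t / t) *
      (a + padicValNat ℓ (f.natDegree / Nat.gcd f.natDegree t)) ≤ n / t * a := by
    refine le_trans ?_ (Nat.mul_le_mul_right a key)
    rw [Finset.sum_mul]
    apply Finset.sum_le_sum
    intro f hf
    rw [mul_assoc]
    apply Nat.mul_le_mul_left
    have hD : 0 < f.natDegree / Nat.gcd f.natDegree t :=
      Nat.div_pos (Nat.gcd_le_left _ (hdpos f hf)) (Nat.gcd_pos_of_pos_left _ (hdpos f hf))
    set D := f.natDegree / Nat.gcd f.natDegree t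
    have h1 : padicValNat ℓ D < D := by
      have h2 : ℓ ^ padicValNat ℓ D ≤ D := Nat.le_of_dvd hD pow_padicValNat_dvd
      exact lt_of_lt_of_le (Nat.lt_pow_self hℓ.one_lt) h2
    nlinarith
  have key3 : (∑ f ∈ μ.support, (((μ f).sum * Nat.gcd f.natDegree t / t : ℕ) : ℤ) *
      ((a : ℤ) + padicValNat ℓ (f.natDegree / Nat.gcd f.natDegree t))) ≤ ((n / t : ℕ) : ℤ) * a := by
    exact_mod_cast key2
  linarith
end

section
/- Let ℓ be an odd prime, q a prime power coprime to ℓ, and t the multiplicative order of q modulo ℓ. For all real numbers u > 0 and ε > 0 there exists N = N(ε) such that for all n ≥ N, #{μ ∈ 𝔛_n : v_ℓ(d_μ) < v_ℓ((n/t)_u)} / |𝔛_n| < ε. Here, for real numbers 0 < r < s, the extended falling factorial is (s)_r = ⌊s⌋! / ⌊s − r⌋!. -/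
/-- The extended falling factorial `(s)_r = ⌊s⌋! / ⌊s − r⌋!` for real `0 < r < s`. -/
noncomputable def fallFact (s r : ℝ) : ℕ :=
  Nat.factorial ⌊s⌋₊ / Nat.factorial ⌊s - r⌋₊

section CountingAux
open Polynomial
open scoped Classical

theorem aux_irr_count {F : Type*} [Field F] [Fintype F] (d : ℕ) (hd : d ≠ 0)
    (S : Finset F[X]) (hS : ∀ f ∈ S, f.Monic ∧ Irreducible f ∧ f.natDegree = d) :
    S.card * d ≤ Fintype.card F ^ d := by
  have hdvd : ∏ f ∈ S, f ∣ (X ^ (Nat.card F) ^ d - X : F[X]) := by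
    apply Finset.prod_dvd_of_coprime
    · intro f hf g hg hfg
      obtain ⟨mf, fi, _⟩ := hS f hf
      obtain ⟨mg, gi, _⟩ := hS g hg
      refine (fi.coprime_iff_not_dvd).2 fun h => hfg ?_
      exact eq_of_monic_of_associated mf mg (fi.associated_of_dvd gi h)
    · intro f hf
      obtain ⟨mf, fi, hfd⟩ := hS f hf
      exact fi.natDegree_dvd_iff_dvd_X_pow_card_pow_sub_X.1 (by rw [hfd])
  have h1 := natDegree_le_of_dvd hdvd
    (FiniteField.X_pow_card_pow_sub_X_ne_zero F hd Finite.one_lt_card)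
  rw [FiniteField.X_pow_card_pow_sub_X_natDegree_eq F hd Finite.one_lt_card,
    natDegree_prod_of_monic _ _ (fun f hf => (hS f hf).1),
    Finset.sum_congr rfl (fun f hf => (hS f hf).2.2)] at h1
  simpa using h1

theorem aux_finite_irr (F : Type*) [Field F] [Fintype F] (n : ℕ) :
    {f : F[X] | f.Monic ∧ Irreducible f ∧ f.natDegree ≤ n}.Finite := by
  have : Finite (degreeLT F (n+1)) := Finite.of_equiv _ (degreeLTEquiv F (n+1)).symm.toEquiv
  refine Set.Finite.subset (Set.toFinite (degreeLT F (n+1) : Set F[X])) ?_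
  rintro f ⟨_, fi, h⟩
  simp only [SetLike.mem_coe, mem_degreeLT]
  rw [degree_eq_natDegree fi.ne_zero]
  exact_mod_cast Nat.lt_succ_of_le h

noncomputable def auxS (F : Type*) [Field F] [Fintype F] (n : ℕ) : Finset F[X] :=
  (aux_finite_irr F n).toFinset

theorem mem_auxS {F : Type*} [Field F] [Fintype F] {n : ℕ} {f : F[X]} :
    f ∈ auxS F n ↔ f.Monic ∧ Irreducible f ∧ f.natDegree ≤ n := by
  simp [auxS]

theorem aux_sum_inv (F : Type*) [Field F] [Fintype F] (n : ℕ) :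
    ∑ f ∈ auxS F n, ((Fintype.card F : ℝ) ^ f.natDegree)⁻¹ ≤ 1 + Real.log n := by
  have hq : (0:ℝ) < Fintype.card F := by exact_mod_cast Fintype.card_pos
  have hm : ∀ f ∈ auxS F n, f.natDegree ∈ Finset.Icc 1 n := by
    intro f hf
    obtain ⟨_, fi, h⟩ := mem_auxS.1 hf
    exact Finset.mem_Icc.2 ⟨fi.natDegree_pos, h⟩
  refine le_trans ?_ (harmonic_le_one_add_log n)
  rw [← Finset.sum_fiberwise_of_maps_to hm, harmonic_eq_sum_Icc]
  push_cast
  apply Finset.sum_le_sum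
  intro d hd
  have hd1 : 1 ≤ d := (Finset.mem_Icc.1 hd).1
  have hc := aux_irr_count d (by omega) ((auxS F n).filter (fun f => f.natDegree = d)) (by
    intro f hf
    rw [Finset.mem_filter, mem_auxS] at hf
    exact ⟨hf.1.1, hf.1.2.1, hf.2⟩)
  rw [Finset.sum_congr rfl (g := fun _ => ((Fintype.card F : ℝ) ^ d)⁻¹) (by
    intro f hf
    rw [(Finset.mem_filter.1 hf).2]), Finset.sum_const, nsmul_eq_mul]
  have hc' : ((((auxS F n).filter (fun f => f.natDegree = d)).card : ℝ)) * d
    ≤ (Fintype.card F : ℝ) ^ d := by exact_mod_cast hc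
  have hd0 : (0:ℝ) < d := by exact_mod_cast hd1
  rw [← div_eq_mul_inv, div_le_iff₀ (by positivity), inv_mul_eq_div, le_div_iff₀ hd0]
  exact hc'

/-- total number of boxes -/
noncomputable def auxK {F : Type*} [Field F] (μ : F[X] →₀ Multiset ℕ) : ℕ :=
  μ.sum fun _ lam => lam.sum

theorem aux_mem_S {F : Type*} [Field F] [Fintype F] {n : ℕ} {μ : F[X] →₀ Multiset ℕ}
    (h : IsXn F n μ) {f : F[X]} (hf : f ∈ μ.support) :
    (μ f).sum * f.natDegree ≤ n ∧ 1 ≤ f.natDegree ∧ 1 ≤ (μ f).sum := by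
  obtain ⟨h1, h2, h3⟩ := h
  refine ⟨?_, (h1 f hf).2.1.natDegree_pos, ?_⟩
  · rw [← h3, Finsupp.sum]
    exact Finset.single_le_sum (f := fun f => (μ f).sum * f.natDegree) (fun _ _ => Nat.zero_le _) hf
  · rw [Finsupp.mem_support_iff] at hf
    obtain ⟨m, hm⟩ := Multiset.exists_mem_of_ne_zero hf
    exact le_trans (h2 f m hm) (Multiset.single_le_sum (by simp) m hm)

theorem aux_support {F : Type*} [Field F] [Fintype F] {n : ℕ} {μ : F[X] →₀ Multiset ℕ}
    (h : IsXn F n μ) : μ.support ⊆ auxS F n := by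
  intro f hf
  obtain ⟨a, b, c⟩ := aux_mem_S h hf
  exact mem_auxS.2 ⟨(h.1 f hf).1, (h.1 f hf).2.1, by nlinarith⟩

theorem aux_sum_le {F : Type*} [Field F] [Fintype F] {n : ℕ} {μ : F[X] →₀ Multiset ℕ}
    (h : IsXn F n μ) (f : F[X]) : (μ f).sum ≤ n := by
  by_cases hf : f ∈ μ.support
  · obtain ⟨a, b, c⟩ := aux_mem_S h hf
    nlinarith
  · rw [Finsupp.notMem_support_iff.1 hf]; simp

/-- multiplicities -/
noncomputable def auxMult {F : Type*} [Field F] [Fintype F] (n : ℕ) (μ : F[X] →₀ Multiset ℕ) :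
    (↥(auxS F n ×ˢ Finset.Icc 1 n)) → ℕ :=
  fun p => (μ p.1.1).count p.1.2

theorem aux_part_mem {F : Type*} [Field F] [Fintype F] {n : ℕ} {μ : F[X] →₀ Multiset ℕ}
    (h : IsXn F n μ) (f : F[X]) : (μ f).toFinset ⊆ Finset.Icc 1 n := by
  intro j hj
  rw [Multiset.mem_toFinset] at hj
  exact Finset.mem_Icc.2 ⟨h.2.1 f j hj, le_trans (Multiset.single_le_sum (by simp) j hj)
    (aux_sum_le h f)⟩

theorem auxMult_inj {F : Type*} [Field F] [Fintype F] (n : ℕ) :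
    Set.InjOn (auxMult (F := F) n) {μ | IsXn F n μ} := by
  intro μ hμ ν hν heq
  ext f : 1
  by_cases hf : f ∈ auxS F n
  · ext j
    by_cases hj : j ∈ Finset.Icc 1 n
    · exact congrFun heq ⟨(f, j), Finset.mem_product.2 ⟨hf, hj⟩⟩
    · rw [Multiset.count_eq_zero_of_notMem, Multiset.count_eq_zero_of_notMem]
      · exact fun h => hj (aux_part_mem hν f (Multiset.mem_toFinset.2 h))
      · exact fun h => hj (aux_part_mem hμ f (Multiset.mem_toFinset.2 h))
  · rw [Finsupp.notMem_support_iff.1 (fun h => hf (aux_support hμ h)),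
      Finsupp.notMem_support_iff.1 (fun h => hf (aux_support hν h))]

theorem auxMult_mem {F : Type*} [Field F] [Fintype F] {n : ℕ} {μ : F[X] →₀ Multiset ℕ}
    (h : IsXn F n μ) : auxMult n μ ∈ Fintype.piFinset (fun _ => Finset.range (n+1)) := by
  rw [Fintype.mem_piFinset]
  rintro ⟨⟨f, j⟩, hp⟩
  obtain ⟨hf, hj⟩ := Finset.mem_product.1 hp
  simp only [auxMult, Finset.mem_range]
  have h1 := aux_sum_le h f
  rw [Finset.sum_multiset_count_of_subset _ _ (aux_part_mem h f)] at h1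
  have h2 := Finset.single_le_sum (f := fun i => Multiset.count i (μ f) • i)
    (fun _ _ => Nat.zero_le _) hj
  have h3 := (Finset.mem_Icc.1 hj).1
  simp only [smul_eq_mul] at h1 h2 h3
  nlinarith

theorem aux_finite (F : Type*) [Field F] [Fintype F] (n : ℕ) :
    {μ : F[X] →₀ Multiset ℕ | IsXn F n μ}.Finite := by
  refine Set.Finite.of_finite_image (f := auxMult n) ?_ (auxMult_inj n)
  refine Set.Finite.subset (Finset.finite_toSet
    (Fintype.piFinset (fun _ : (↥(auxS F n ×ˢ Finset.Icc 1 n)) => Finset.range (n+1)))) ?_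
  rintro _ ⟨μ, hμ, rfl⟩
  exact auxMult_mem hμ

theorem aux_weight {F : Type*} [Field F] [Fintype F] {n : ℕ} {μ : F[X] →₀ Multiset ℕ}
    (h : IsXn F n μ) (y : ℝ) :
    y ^ auxK μ * ((Fintype.card F : ℝ) ^ n)⁻¹ =
      ∏ p : (↥(auxS F n ×ˢ Finset.Icc 1 n)),
        ((y * ((Fintype.card F : ℝ) ^ p.1.1.natDegree)⁻¹) ^ p.1.2) ^ (auxMult n μ p) := by
  have e1 : auxK μ = ∑ f ∈ auxS F n, (μ f).sum :=
    Finsupp.sum_of_support_subset _ (aux_support h) _ (by simp)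
  have e2 : n = ∑ f ∈ auxS F n, (μ f).sum * f.natDegree := by
    conv_lhs => rw [← h.2.2]
    exact Finsupp.sum_of_support_subset _ (aux_support h) _ (by simp)
  have e3 : y ^ auxK μ * ((Fintype.card F : ℝ) ^ n)⁻¹ =
      ∏ f ∈ auxS F n, (y * ((Fintype.card F : ℝ) ^ f.natDegree)⁻¹) ^ (μ f).sum := by
    rw [e1]
    conv_lhs => rw [show (Fintype.card F : ℝ) ^ n = 
      (Fintype.card F : ℝ) ^ (∑ f ∈ auxS F n, (μ f).sum * f.natDegree) by rw [← e2]]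
    rw [← Finset.prod_pow_eq_pow_sum, ← Finset.prod_pow_eq_pow_sum, ← Finset.prod_inv_distrib,
      ← Finset.prod_mul_distrib]
    refine Finset.prod_congr rfl fun f _ => ?_
    rw [mul_pow, inv_pow, ← pow_mul, mul_comm (f.natDegree)]
  rw [e3]
  simp only [auxMult]
  rw [Finset.prod_coe_sort (auxS F n ×ˢ Finset.Icc 1 n) (fun p =>
    ((y * ((Fintype.card F : ℝ) ^ p.1.natDegree)⁻¹) ^ p.2) ^ ((μ p.1).count p.2)),
    Finset.prod_product]
  refine Finset.prod_congr rfl fun f _ => ?_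
  rw [Finset.sum_multiset_count_of_subset _ _ (aux_part_mem h f), ← Finset.prod_pow_eq_pow_sum]
  refine Finset.prod_congr rfl fun j _ => ?_
  rw [← pow_mul, smul_eq_mul]
  exact congrArg _ (mul_comm _ _)

theorem aux_geom {x : ℝ} (h0 : 0 ≤ x) (h1 : x ≤ 3/4) (n : ℕ) :
    ∏ j ∈ Finset.Icc 1 n, ∑ m ∈ Finset.range (n+1), (x ^ j) ^ m ≤ Real.exp (16 * x) := by
  have hs : ∀ s : ℝ, 0 ≤ s → s ≤ 3/4 → ∑ m ∈ Finset.range (n+1), s ^ m ≤ Real.exp (4 * s) := by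
    intro s h0 h1
    have h2 : ∑ m ∈ Finset.range (n+1), s ^ m ≤ (1 - s)⁻¹ := by
      rw [← tsum_geometric_of_lt_one h0 (by linarith)]
      exact Summable.sum_le_tsum _ (fun _ _ => by positivity)
        (summable_geometric_of_lt_one h0 (by linarith))
    refine h2.trans (le_trans ?_ (Real.add_one_le_exp (4*s)))
    rw [inv_le_iff_one_le_mul₀ (by linarith)]
    nlinarith
  calc _ ≤ ∏ j ∈ Finset.Icc 1 n, Real.exp (4 * x ^ j) := by
        refine Finset.prod_le_prod (fun _ _ => Finset.sum_nonneg fun _ _ => by positivity) ?_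
        intro j hj
        refine hs _ (by positivity) (le_trans (pow_le_of_le_one h0 (by linarith) ?_) h1)
        have := (Finset.mem_Icc.1 hj).1; omega
    _ = Real.exp (∑ j ∈ Finset.Icc 1 n, 4 * x ^ j) := (Real.exp_sum _ _).symm
    _ ≤ _ := by
        apply Real.exp_le_exp.2
        have h2 : ∑ m ∈ Finset.range n, x ^ m ≤ (1 - x)⁻¹ := by
          rw [← tsum_geometric_of_lt_one h0 (by linarith)]
          exact Summable.sum_le_tsum _ (fun _ _ => by positivity)
            (summable_geometric_of_lt_one h0 (by linarith))
        have h3 : (1 - x)⁻¹ ≤ 4 := by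
          rw [inv_le_iff_one_le_mul₀ (by linarith)]; linarith
        have h4 : ∑ j ∈ Finset.Icc 1 n, 4 * x ^ j = 4 * x * ∑ m ∈ Finset.range n, x ^ m := by
          clear h2
          induction n with
          | zero => simp
          | succ k ih =>
            rw [Finset.sum_Icc_succ_top (by omega), Finset.sum_range_succ, ih (by
              intro s a b
              exact le_trans (Finset.sum_le_sum_of_subset_of_nonneg (by
                intro i; simp; omega) (fun _ _ _ => by positivity)) (hs s a b))]
            ring
        rw [h4]
        nlinarith

theorem aux_moment (F : Type*) [Field F] [Fintype F] (n : ℕ)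
    (T : Finset (F[X] →₀ Multiset ℕ)) (hT : ∀ μ ∈ T, IsXn F n μ) :
    ∑ μ ∈ T, (3/2 : ℝ) ^ auxK μ * ((Fintype.card F : ℝ) ^ n)⁻¹ ≤
      Real.exp (24 * (1 + Real.log n)) := by
  classical
  have hq : (2:ℝ) ≤ Fintype.card F := by exact_mod_cast Fintype.one_lt_card
  set x : F[X] → ℝ := fun f => 3/2 * ((Fintype.card F : ℝ) ^ f.natDegree)⁻¹ with hx
  have x0 : ∀ f, 0 ≤ x f := fun f => by simp only [hx]; positivity
  calc _ = ∑ μ ∈ T, ∏ p : (↥(auxS F n ×ˢ Finset.Icc 1 n)), ((x p.1.1) ^ p.1.2) ^ (auxMult n μ p) :=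
        Finset.sum_congr rfl fun μ hμ => aux_weight (hT μ hμ) _
    _ = ∑ m ∈ T.image (auxMult n), ∏ p : (↥(auxS F n ×ˢ Finset.Icc 1 n)),
          ((x p.1.1) ^ p.1.2) ^ (m p) := by
        rw [Finset.sum_image]
        exact fun a ha b hb => auxMult_inj n (hT a ha) (hT b hb)
    _ ≤ ∑ m ∈ Fintype.piFinset (fun _ : (↥(auxS F n ×ˢ Finset.Icc 1 n)) => Finset.range (n+1)),
          ∏ p : (↥(auxS F n ×ˢ Finset.Icc 1 n)), ((x p.1.1) ^ p.1.2) ^ (m p) := by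
        refine Finset.sum_le_sum_of_subset_of_nonneg ?_ ?_
        · intro m hm
          obtain ⟨μ, hμ, rfl⟩ := Finset.mem_image.1 hm
          exact auxMult_mem (hT μ hμ)
        · intro m _ _
          exact Finset.prod_nonneg fun p _ => pow_nonneg (pow_nonneg (x0 _) _) _
    _ = ∏ p : (↥(auxS F n ×ˢ Finset.Icc 1 n)), ∑ m ∈ Finset.range (n+1),
          ((x p.1.1) ^ p.1.2) ^ m :=
        (Finset.prod_univ_sum (fun _ : (↥(auxS F n ×ˢ Finset.Icc 1 n)) => Finset.range (n+1))
          (fun p m => ((x p.1.1) ^ p.1.2) ^ m)).symm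
    _ = ∏ f ∈ auxS F n, ∏ j ∈ Finset.Icc 1 n, ∑ m ∈ Finset.range (n+1), (x f ^ j) ^ m := by
        rw [Finset.prod_coe_sort (auxS F n ×ˢ Finset.Icc 1 n)
          (fun p => ∑ m ∈ Finset.range (n+1), ((x p.1) ^ p.2) ^ m), Finset.prod_product]
    _ ≤ ∏ f ∈ auxS F n, Real.exp (16 * x f) := by
        refine Finset.prod_le_prod (fun f _ => Finset.prod_nonneg fun j _ =>
          Finset.sum_nonneg fun m _ => pow_nonneg (pow_nonneg (x0 _) _) _) ?_
        intro f hf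
        refine aux_geom (x0 f) ?_ n
        have hd : 1 ≤ f.natDegree := (mem_auxS.1 hf).2.1.natDegree_pos
        have : (2:ℝ) ≤ (Fintype.card F : ℝ) ^ f.natDegree :=
          hq.trans (le_self_pow₀ (by linarith) (by omega))
        have h2 := inv_anti₀ (by norm_num) this
        simp only [hx]
        linarith
    _ = Real.exp (∑ f ∈ auxS F n, 16 * x f) := (Real.exp_sum _ _).symm
    _ ≤ _ := by
        apply Real.exp_le_exp.2
        have := aux_sum_inv F n
        have e : ∑ f ∈ auxS F n, 16 * x f =
          24 * ∑ f ∈ auxS F n, ((Fintype.card F : ℝ) ^ f.natDegree)⁻¹ := by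
          rw [Finset.mul_sum]
          refine Finset.sum_congr rfl fun f _ => ?_
          simp only [hx]; ring
        rw [e]; linarith

theorem aux_tail (F : Type*) [Field F] [Fintype F] (n k : ℕ)
    (P : (F[X] →₀ Multiset ℕ) → Prop) (hP : ∀ μ, P μ → IsXn F n μ ∧ k ≤ auxK μ) :
    (Nat.card {μ // P μ} : ℝ) ≤
      (Fintype.card F : ℝ) ^ n * Real.exp (24 * (1 + Real.log n)) * ((3/2 : ℝ) ^ k)⁻¹ := by
  have hq : (0:ℝ) < Fintype.card F := by exact_mod_cast Fintype.card_pos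
  have hfin : {μ | P μ}.Finite := (aux_finite F n).subset fun μ h => (hP μ h).1
  have hc : Nat.card {μ // P μ} = hfin.toFinset.card := by
    rw [← Set.ncard_eq_toFinset_card _ hfin]; rfl
  rw [hc]
  have h1 := aux_moment F n hfin.toFinset (fun μ h => (hP μ (by simpa using h)).1)
  have h2 : (hfin.toFinset.card : ℝ) * ((3/2 : ℝ) ^ k * ((Fintype.card F : ℝ) ^ n)⁻¹) ≤
      ∑ μ ∈ hfin.toFinset, (3/2 : ℝ) ^ auxK μ * ((Fintype.card F : ℝ) ^ n)⁻¹ := by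
    rw [← nsmul_eq_mul]
    refine Finset.card_nsmul_le_sum _ _ _ fun μ h => ?_
    have := (hP μ (by simpa using h)).2
    gcongr
    norm_num
  have h3 := h2.trans h1
  rw [← div_eq_mul_inv, ← mul_div_assoc, div_le_iff₀ (by positivity)] at h3
  rw [← div_eq_mul_inv, le_div_iff₀ (by positivity)]
  linarith

end CountingAux
section LowerAux
open Polynomial UniqueFactorizationMonoid
open scoped Classical

noncomputable def auxG {F : Type*} [Field F] (n : ℕ) (p : degreeLT F n) : F[X] :=
  X ^ (n+1) + (X * p.1 + 1)

theorem auxG_deg {F : Type*} [Field F] (n : ℕ) (p : degreeLT F n) :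
    degree (X * p.1 + 1) < (n+1 : ℕ) := by
  refine lt_of_le_of_lt (degree_add_le _ _) (max_lt ?_ ?_)
  · rw [X_mul, degree_mul_X]
    have := mem_degreeLT.1 p.2
    push_cast
    exact WithBot.add_lt_add_right (by simp) this
  · rw [degree_one]; exact_mod_cast Nat.succ_pos n

theorem auxG_monic {F : Type*} [Field F] (n : ℕ) (p : degreeLT F n) : (auxG n p).Monic :=
  monic_X_pow_add (auxG_deg n p)

theorem auxG_natDegree {F : Type*} [Field F] (n : ℕ) (p : degreeLT F n) :
    (auxG n p).natDegree = n + 1 := by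
  refine natDegree_eq_of_degree_eq_some ?_
  rw [auxG, degree_add_eq_left_of_degree_lt, degree_X_pow]
  rw [degree_X_pow]; exact auxG_deg n p

noncomputable def auxMu {F : Type*} [Field F] (n : ℕ) (p : degreeLT F n) :
    F[X] →₀ Multiset ℕ :=
  (Multiset.toFinsupp (normalizedFactors (auxG n p))).mapRange
    (fun k => Multiset.replicate k 1) (by simp)

theorem auxMu_apply {F : Type*} [Field F] (n : ℕ) (p : degreeLT F n) (f : F[X]) :
    auxMu n p f = Multiset.replicate ((normalizedFactors (auxG n p)).count f) 1 := by
  rfl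

theorem auxMu_sum {F : Type*} [Field F] (n : ℕ) (p : degreeLT F n) (f : F[X]) :
    (auxMu n p f).sum = (normalizedFactors (auxG n p)).count f := by
  rw [auxMu_apply]; simp

theorem auxMu_isXn {F : Type*} [Field F] (n : ℕ) (p : degreeLT F n) :
    IsXn F (n+1) (auxMu n p) := by
  have hm : ∀ f ∈ (auxMu n p).support, f ∈ normalizedFactors (auxG n p) := by
    intro f hf
    by_contra h
    rw [Finsupp.mem_support_iff] at hf
    apply hf
    rw [auxMu_apply]; simp [Multiset.count_eq_zero_of_notMem h]
  have hne : auxG n p ≠ 0 := (auxG_monic n p).ne_zero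
  refine ⟨?_, ?_, ?_⟩
  · intro f hf
    have h := hm f hf
    have hi := irreducible_of_normalized_factor f h
    refine ⟨?_, hi, ?_⟩
    · rw [← normalize_normalized_factor f h]
      exact monic_normalize hi.ne_zero
    · rintro rfl
      have := dvd_of_mem_normalizedFactors h
      rw [X_dvd_iff] at this
      simp [auxG] at this
  · intro f m hm
    rw [auxMu_apply] at hm
    rw [Multiset.eq_of_mem_replicate hm]; exact one_pos
  · have h0 : (0 : F[X]) ∉ normalizedFactors (auxG n p) := zero_notMem_normalizedFactors _
    have e := natDegree_multiset_prod _ h0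
    rw [prod_normalizedFactors_eq hne, (auxG_monic n p).normalize_eq_self, auxG_natDegree] at e
    rw [e, Finsupp.sum, Finset.sum_multiset_map_count]
    simp only [auxMu_sum, smul_eq_mul]
    refine Finset.sum_subset ?_ ?_
    · intro f hf; exact Multiset.mem_toFinset.2 (hm f hf)
    · intro f _ hf
      have := auxMu_sum n p f
      rw [Finsupp.notMem_support_iff.1 hf] at this
      rw [← this]; simp

theorem auxMu_inj {F : Type*} [Field F] (n : ℕ) : Function.Injective (auxMu (F := F) n) := by
  intro p r h
  have e : normalizedFactors (auxG n p) = normalizedFactors (auxG n r) := by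
    ext f
    rw [← auxMu_sum, ← auxMu_sum, h]
  have e2 := prod_normalizedFactors_eq (auxG_monic n p).ne_zero
  rw [e, prod_normalizedFactors_eq (auxG_monic n r).ne_zero,
    (auxG_monic n p).normalize_eq_self, (auxG_monic n r).normalize_eq_self] at e2
  simp only [auxG] at e2
  have e3 := add_right_cancel (add_left_cancel e2)
  exact Subtype.ext (mul_left_cancel₀ X_ne_zero e3).symm

theorem aux_card_lower (F : Type*) [Field F] [Fintype F] (n : ℕ) (hn : 1 ≤ n) :
    (Fintype.card F : ℝ) ^ (n-1) ≤ (Nat.card {μ : F[X] →₀ Multiset ℕ // IsXn F n μ} : ℝ) := by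
  obtain ⟨n, rfl⟩ : ∃ m, n = m + 1 := ⟨n-1, by omega⟩
  have : Finite {μ : F[X] →₀ Multiset ℕ // IsXn F (n+1) μ} := aux_finite F (n+1)
  have h := Nat.card_le_card_of_injective
    (fun p : degreeLT F n => (⟨auxMu n p, auxMu_isXn n p⟩ : {μ // IsXn F (n+1) μ}))
    (fun a b h => auxMu_inj n (by simpa using h))
  rw [Nat.card_congr (degreeLTEquiv F n).toEquiv] at h
  simp at h
  exact_mod_cast h

end LowerAux
section CellsAux

theorem aux_partNth_pos {lam : Multiset ℕ} {i j : ℕ} (h : j < partNth lam i) :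
    i < conjNth lam j := by
  set L := (lam.sort (· ≤ ·)).reverse with hL
  have hlam : (L : Multiset ℕ) = lam := by
    rw [hL, Multiset.coe_reverse, Multiset.sort_eq]
  have hs : L.Pairwise (· ≥ ·) := by
    rw [hL, List.pairwise_reverse]
    exact Multiset.pairwise_sort lam (· ≤ ·)
  have hp : partNth lam i = L.getD i 0 := rfl
  rw [hp] at h
  have hi : i < L.length := by
    by_contra hc
    rw [List.getD_eq_default _ _ (by omega)] at h
    omega
  rw [List.getD_eq_getElem _ _ hi] at h
  have hall : ∀ x ∈ L.take (i+1), j < x := by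
    intro x hx
    obtain ⟨k, hk, rfl⟩ := List.mem_iff_getElem.1 hx
    rw [List.getElem_take]
    rw [List.length_take] at hk
    rcases Nat.lt_or_ge k i with hki | hki
    · have := List.pairwise_iff_getElem.1 hs k i (by omega) hi hki
      omega
    · have : k = i := by omega
      subst this; exact h
  have h1 : (L.take (i+1)).filter (fun m => decide (j < m)) = L.take (i+1) :=
    List.filter_eq_self.2 (by simpa using hall)
  have h2 := ((List.take_sublist (i+1) L).filter (fun m => decide (j < m))).length_le
  rw [h1, List.length_take] at h2
  rw [conjNth, ← hlam, Multiset.filter_coe, Multiset.coe_card]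
  omega

theorem aux_sum_part (lam : Multiset ℕ) :
    ∑ i ∈ Finset.range (Multiset.card lam), partNth lam i = lam.sum := by
  set L := (lam.sort (· ≤ ·)).reverse with hL
  have hlam : (L : Multiset ℕ) = lam := by
    rw [hL, Multiset.coe_reverse, Multiset.sort_eq]
  have hp : ∀ i, partNth lam i = L.getD i 0 := fun _ => rfl
  simp only [hp]
  rw [← hlam, Multiset.coe_card, Multiset.sum_coe]
  clear_value L
  clear hL hlam hp
  rw [← Fin.sum_univ_eq_sum_range (fun i => L.getD i 0), ← Fin.sum_univ_getElem]
  simp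

theorem aux_cells_card (lam : Multiset ℕ) : (cellsOf lam).card ≤ lam.sum := by
  conv_rhs => rw [← aux_sum_part lam]
  have : cellsOf lam ⊆ ((Finset.range (Multiset.card lam)).sigma
      (fun i => Finset.range (partNth lam i))).image (fun p => (p.1, p.2)) := by
    intro c hc
    simp only [cellsOf, Finset.mem_filter, Finset.mem_product, Finset.mem_range] at hc
    refine Finset.mem_image.2 ⟨⟨c.1, c.2⟩, ?_, rfl⟩
    simp [hc.1.1, hc.2]
  refine (Finset.card_le_card this).trans (Finset.card_image_le.trans ?_)
  simp [Finset.card_sigma]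

theorem aux_hook {lam : Multiset ℕ} (hpos : ∀ m ∈ lam, 0 < m) {c : ℕ × ℕ} (hc : c ∈ cellsOf lam) :
    1 ≤ hookLen lam c ∧ hookLen lam c ≤ 2 * lam.sum := by
  simp only [cellsOf, Finset.mem_filter, Finset.mem_product, Finset.mem_range] at hc
  have h1 := aux_partNth_pos hc.2
  have h2 : partNth lam c.1 ≤ lam.sum := by
    conv_rhs => rw [← aux_sum_part lam]
    exact Finset.single_le_sum (f := fun i => partNth lam i) (fun _ _ => Nat.zero_le _)
      (Finset.mem_range.2 hc.1.1)
  have h3 : conjNth lam c.2 ≤ lam.sum := by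
    refine (Multiset.card_le_card (Multiset.filter_le _ _)).trans ?_
    have := Multiset.card_nsmul_le_sum (s := lam) (a := 1) (fun m hm => hpos m hm)
    simpa using this
  simp only [hookLen]
  have := hc.2
  omega

end CellsAux
section ValAux

theorem aux_val_prod {ι : Type*} (p : ℕ) [Fact p.Prime] (s : Finset ι) (f : ι → ℚ)
    (h : ∀ i ∈ s, f i ≠ 0) :
    padicValRat p (∏ i ∈ s, f i) = ∑ i ∈ s, padicValRat p (f i) := by
  classical
  induction s using Finset.induction_on with
  | empty => simp
  | insert a s ha ih =>
    rw [Finset.prod_insert ha, Finset.sum_insert ha, padicValRat.mul (h a (by simp))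
      (Finset.prod_ne_zero_iff.2 fun i hi => h i (by simp [hi])),
      ih fun i hi => h i (by simp [hi])]

theorem aux_cast_sub {q : ℕ} (hq : 2 ≤ q) (m : ℕ) :
    ((q : ℚ) ^ m - 1) = ((q ^ m - 1 : ℕ) : ℚ) := by
  rw [Nat.cast_sub (Nat.one_le_pow _ _ (by omega))]
  push_cast; rfl

theorem aux_sub_ne {q : ℕ} (hq : 2 ≤ q) {m : ℕ} (hm : 1 ≤ m) : q ^ m - 1 ≠ 0 := by
  have : q ^ 1 ≤ q ^ m := Nat.pow_le_pow_right (by omega) hm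
  rw [pow_one] at this
  omega

theorem aux_dvd {ℓ q m : ℕ} (hq : 2 ≤ q) (h : orderOf (q : ZMod ℓ) ∣ m) : ℓ ∣ q ^ m - 1 := by
  have h1 : (q : ZMod ℓ) ^ m = 1 := orderOf_dvd_iff_pow_eq_one.1 h
  rw [← ZMod.natCast_eq_zero_iff, Nat.cast_sub (Nat.one_le_pow _ _ (by omega))]
  push_cast
  rw [h1, sub_self]

theorem aux_w_le {ℓ q : ℕ} [Fact ℓ.Prime] (hodd : Odd ℓ) (hq : 2 ≤ q) (hco : Nat.Coprime q ℓ)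
    {t : ℕ} (ht : t = orderOf (q : ZMod ℓ)) (ht0 : 1 ≤ t) {m : ℕ} (hm : 1 ≤ m) :
    padicValNat ℓ (q ^ m - 1) ≤ padicValNat ℓ (q ^ t - 1) + Nat.log 2 m := by
  have hℓ : ℓ.Prime := Fact.out
  have h1 : q ^ t ≠ 0 := by positivity
  have h2 := aux_sub_ne hq ht0
  have h3 := padicValNat.pow_sub_pow hodd (x := q ^ t) (y := 1) (by omega)
    (aux_dvd hq (by rw [ht])) (by
      intro h
      have := hℓ.dvd_of_dvd_pow h
      have := Nat.dvd_gcd this dvd_rfl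
      rw [hco] at this
      exact hℓ.one_lt.ne' (Nat.dvd_one.1 this)) (n := m) (by omega)
  rw [one_pow] at h3
  have h4 : padicValNat ℓ (q ^ m - 1) ≤ padicValNat ℓ ((q ^ t) ^ m - 1) := by
    have hd : q ^ m - 1 ∣ (q ^ t) ^ m - 1 := by
      rw [← pow_mul, mul_comm, pow_mul]
      simpa using Nat.sub_dvd_pow_sub_pow (q ^ m) 1 t
    have hne : (q ^ t) ^ m - 1 ≠ 0 := by
      rw [← pow_mul]; exact aux_sub_ne hq (by nlinarith)
    exact (padicValNat_dvd_iff_le hne).1 (pow_padicValNat_dvd.trans hd)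
  have h5 : padicValNat ℓ m ≤ Nat.log 2 m :=
    (padicValNat_le_nat_log m).trans (Nat.log_anti_left (by norm_num) hℓ.two_le)
  omega

theorem aux_val_psi {ℓ q : ℕ} [Fact ℓ.Prime] (hq : 2 ≤ q)
    {t : ℕ} (ht : t = orderOf (q : ZMod ℓ)) (ht0 : 1 ≤ t) (n : ℕ) :
    ((n / t : ℕ) : ℤ) ≤ padicValRat ℓ (psiPoly n (q : ℚ)) := by
  rw [psiPoly, aux_val_prod]
  · have h1 : ∀ i ∈ Finset.Icc 1 n, (if t ∣ i then 1 else 0 : ℤ) ≤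
        padicValRat ℓ ((q : ℚ) ^ i - 1) := by
      intro i hi
      rw [aux_cast_sub hq, padicValRat.of_nat]
      split_ifs with h
      · have := one_le_padicValNat_of_dvd (aux_sub_ne hq (Finset.mem_Icc.1 hi).1)
          (aux_dvd (ℓ := ℓ) hq (m := i) (by rw [← ht]; exact h))
        exact_mod_cast this
      · positivity
    refine le_trans ?_ (Finset.sum_le_sum h1)
    rw [Finset.sum_boole]
    have h2 : (Finset.Icc 1 (n/t)).image (fun k => t * k) ⊆
        (Finset.Icc 1 n).filter (fun i => t ∣ i) := by
      intro i hi
      obtain ⟨k, hk, rfl⟩ := Finset.mem_image.1 hi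
      obtain ⟨hk1, hk2⟩ := Finset.mem_Icc.1 hk
      refine Finset.mem_filter.2 ⟨Finset.mem_Icc.2 ⟨by nlinarith, ?_⟩, Dvd.intro _ rfl⟩
      exact (Nat.mul_le_mul_left t hk2).trans (Nat.mul_div_le n t)
    have h3 := Finset.card_le_card h2
    rw [Finset.card_image_of_injective _ (fun a b h => Nat.eq_of_mul_eq_mul_left ht0 h)] at h3
    simp only [Nat.card_Icc, Nat.add_sub_cancel] at h3
    exact_mod_cast h3
  · intro i hi
    rw [aux_cast_sub hq]
    exact_mod_cast aux_sub_ne hq (Finset.mem_Icc.1 hi).1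

theorem aux_val_dMu {ℓ q : ℕ} [Fact ℓ.Prime] (hodd : Odd ℓ) (hq : 2 ≤ q) (hco : Nat.Coprime q ℓ)
    {t : ℕ} (ht : t = orderOf (q : ZMod ℓ)) (ht0 : 1 ≤ t)
    {F : Type*} [Field F] [Fintype F] {n : ℕ} {μ : Polynomial F →₀ Multiset ℕ} (h : IsXn F n μ) :
    ((n / t : ℕ) : ℤ) - auxK μ * (padicValNat ℓ (q ^ t - 1) + Nat.log 2 (2 * n) : ℕ) ≤
      padicValRat ℓ (dMu q n μ) := by
  have hℓ : ℓ.Prime := Fact.out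
  have hq0 : (q : ℚ) ≠ 0 := by positivity
  have hvq : padicValRat ℓ (q : ℚ) = 0 := by
    rw [padicValRat.of_nat]
    have : padicValNat ℓ q = 0 := by
      apply padicValNat.eq_zero_of_not_dvd
      intro h
      have := Nat.dvd_gcd h dvd_rfl
      rw [hco] at this
      exact hℓ.one_lt.ne' (Nat.dvd_one.1 this)
    rw [this]; rfl
  set A := padicValNat ℓ (q ^ t - 1) + Nat.log 2 (2 * n) with hA
  have hcell : ∀ f ∈ μ.support, ∀ c ∈ cellsOf (μ f),
      ((q : ℚ) ^ f.natDegree) ^ hookLen (μ f) c - 1 ≠ 0 ∧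
      padicValRat ℓ (((q : ℚ) ^ f.natDegree) ^ hookLen (μ f) c - 1) ≤ A := by
    intro f hf c hc
    obtain ⟨a1, a2, a3⟩ := aux_mem_S h hf
    obtain ⟨b1, b2⟩ := aux_hook (h.2.1 f) hc
    have hm : 1 ≤ f.natDegree * hookLen (μ f) c := Nat.mul_pos a2 b1
    rw [← pow_mul, aux_cast_sub hq, padicValRat.of_nat]
    refine ⟨by exact_mod_cast aux_sub_ne hq hm, ?_⟩
    have h1 := aux_w_le hodd hq hco ht ht0 hm
    have h2 : Nat.log 2 (f.natDegree * hookLen (μ f) c) ≤ Nat.log 2 (2 * n) :=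
      Nat.log_mono_right (by nlinarith)
    have : padicValNat ℓ (q ^ (f.natDegree * hookLen (μ f) c) - 1) ≤ A := by omega
    exact_mod_cast this
  have hden : ∀ f ∈ μ.support,
      ∏ c ∈ cellsOf (μ f), (((q : ℚ) ^ f.natDegree) ^ hookLen (μ f) c - 1) ≠ 0 :=
    fun f hf => Finset.prod_ne_zero_iff.2 fun c hc => (hcell f hf c hc).1
  have hfac : ∀ f ∈ μ.support, hFactor (μ f) ((q : ℚ) ^ f.natDegree) ≠ 0 := by
    intro f hf
    exact div_ne_zero (pow_ne_zero _ (pow_ne_zero _ hq0)) (hden f hf)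
  have hfv : ∀ f ∈ μ.support, -(((μ f).sum : ℤ) * A) ≤
      padicValRat ℓ (hFactor (μ f) ((q : ℚ) ^ f.natDegree)) := by
    intro f hf
    rw [hFactor, padicValRat.div (pow_ne_zero _ (pow_ne_zero _ hq0)) (hden f hf),
      padicValRat.pow, padicValRat.pow, hvq,
      aux_val_prod _ _ _ (fun c hc => (hcell f hf c hc).1)]
    have h1 := Finset.sum_le_card_nsmul _ _ _ (fun c hc => (hcell f hf c hc).2)
    rw [nsmul_eq_mul] at h1
    have h2 : ((cellsOf (μ f)).card : ℤ) ≤ (μ f).sum := by exact_mod_cast aux_cells_card (μ f)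
    have h3 : ((cellsOf (μ f)).card : ℤ) * A ≤ (μ f).sum * A :=
      mul_le_mul_of_nonneg_right h2 (by positivity)
    linarith
  have hpsi : psiPoly n (q : ℚ) ≠ 0 := by
    refine Finset.prod_ne_zero_iff.2 fun i hi => ?_
    rw [aux_cast_sub hq]
    exact_mod_cast aux_sub_ne hq (Finset.mem_Icc.1 hi).1
  rw [dMu, padicValRat.mul hpsi (Finset.prod_ne_zero_iff.2 hfac), aux_val_prod _ _ _ hfac]
  have h1 := aux_val_psi (ℓ := ℓ) hq ht ht0 n
  have h2 := Finset.sum_le_sum hfv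
  have h3 : ∑ f ∈ μ.support, -(((μ f).sum : ℤ) * A) = -(auxK μ * A) := by
    rw [Finset.sum_neg_distrib, ← Finset.sum_mul, auxK, Finsupp.sum]
    push_cast; rfl
  rw [h3] at h2
  linarith

theorem aux_fall {ℓ : ℕ} [Fact ℓ.Prime] {n t : ℕ} (ht0 : 1 ≤ t) {u : ℝ} (hu : 0 < u) :
    padicValNat ℓ (fallFact ((n : ℝ) / t) u) ≤ (⌊u⌋₊ + 2) * (Nat.log 2 (2 * n) + 1) := by
  have hℓ : ℓ.Prime := Fact.out
  set a := ⌊(n : ℝ) / t⌋₊ with ha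
  set b := ⌊(n : ℝ) / t - u⌋₊ with hb
  have hs : (0:ℝ) ≤ (n : ℝ) / t := by positivity
  have hba : b ≤ a := Nat.floor_mono (by linarith)
  have han : a ≤ n := by
    rw [ha, Nat.floor_div_natCast, Nat.floor_natCast]; exact Nat.div_le_self _ _
  have hab : a ≤ b + (⌊u⌋₊ + 2) := by
    have h1 : (a : ℝ) ≤ (n : ℝ) / t := Nat.floor_le hs
    have h2 := Nat.lt_floor_add_one ((n : ℝ) / t - u)
    have h3 := Nat.lt_floor_add_one u
    have : (a : ℝ) < ((b + (⌊u⌋₊ + 2) : ℕ) : ℝ) := by push_cast; linarith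
    exact le_of_lt (by exact_mod_cast this)
  have e : fallFact ((n : ℝ) / t) u = a.descFactorial (a - b) := by
    rw [Nat.descFactorial_eq_div (by omega), fallFact]
    congr 2
    omega
  rw [e]
  refine (padicValNat_le_nat_log _).trans ((Nat.log_anti_left (by norm_num) hℓ.two_le).trans ?_)
  have h1 : a.descFactorial (a - b) ≤ 2 ^ ((⌊u⌋₊ + 2) * (Nat.log 2 (2 * n) + 1)) := by
    refine (Nat.descFactorial_le_pow _ _).trans ?_
    have h2 : a ≤ 2 ^ (Nat.log 2 (2 * n) + 1) :=
      (show a ≤ 2 * n by omega).trans (Nat.lt_pow_succ_log_self (by norm_num) _).le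
    refine (Nat.pow_le_pow_left h2 _).trans ?_
    rw [← pow_mul]
    refine Nat.pow_le_pow_right (by norm_num) ?_
    rw [mul_comm]
    exact Nat.mul_le_mul_right _ (by omega)
  calc _ ≤ Nat.log 2 (2 ^ ((⌊u⌋₊ + 2) * (Nat.log 2 (2 * n) + 1))) := Nat.log_mono_right h1
    _ = _ := Nat.log_pow (by norm_num) _

end ValAux
theorem aux_eventually (C : ℕ) : ∃ N : ℕ, ∀ n ≥ N, C * (Nat.log 2 (2 * n) + 1) ^ 2 ≤ n := by
  have h := tendsto_pow_const_div_const_pow_of_one_lt 2 (r := (2:ℝ)) (by norm_num)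
  have h1 : ∀ᶠ m : ℕ in Filter.atTop, (m : ℝ) ^ 2 / 2 ^ m < 1 / (4 * (C + 1)) :=
    h.eventually (gt_mem_nhds (by positivity))
  obtain ⟨M, hM⟩ := Filter.eventually_atTop.1 h1
  refine ⟨2 ^ M, fun n hn => ?_⟩
  have hn0 : n ≠ 0 := by
    have : 0 < 2 ^ M := by positivity
    omega
  have hL : M ≤ Nat.log 2 (2 * n) + 1 := by
    have : M ≤ Nat.log 2 (2 * n) := Nat.le_log_of_pow_le (by norm_num) (by omega)
    omega
  have h2 := hM _ hL
  have h3 : 2 ^ Nat.log 2 (2 * n) ≤ 2 * n := Nat.pow_log_le_self 2 (by omega)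
  set L := Nat.log 2 (2 * n)
  rw [div_lt_iff₀ (by positivity), div_mul_eq_mul_div, one_mul, lt_div_iff₀ (by positivity)] at h2
  have h4 : (L + 1) ^ 2 * (4 * (C + 1)) < 2 ^ (L + 1) := by exact_mod_cast h2
  rw [pow_succ 2 L] at h4
  nlinarith

theorem ell_adic_proportion_of_low_valuation
    (ℓ : ℕ) (hℓ : ℓ.Prime) (hodd : Odd ℓ)
    (q : ℕ) (hq : IsPrimePow q) (hco : Nat.Coprime q ℓ)
    (t : ℕ) (ht : t = orderOf (q : ZMod ℓ))
    (F : Type*) [Field F] [Fintype F] (hFq : Fintype.card F = q) :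
    ∀ u ε : ℝ, 0 < u → 0 < ε → ∃ N : ℕ, ∀ n ≥ N,
      (Nat.card {μ : Polynomial F →₀ Multiset ℕ //
            IsXn F n μ ∧
              padicValRat ℓ (dMu q n μ) <
                (padicValNat ℓ (fallFact ((n : ℝ) / (t : ℝ)) u) : ℤ)} : ℝ) /
          (Nat.card {μ : Polynomial F →₀ Multiset ℕ // IsXn F n μ} : ℝ) < ε := by
  
  intro u ε hu hε
  haveI : Fact ℓ.Prime := ⟨hℓ⟩
  have hq2 : 2 ≤ q := by rw [← hFq]; exact Fintype.one_lt_card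
  have ht0 : 1 ≤ t := by
    rw [ht]
    refine orderOf_pos_iff.2 (isOfFinOrder_iff_pow_eq_one.2 ⟨ℓ - 1, ?_, ?_⟩)
    · have := hℓ.two_le; omega
    · apply ZMod.pow_card_sub_one_eq_one
      intro h
      rw [ZMod.natCast_eq_zero_iff] at h
      have := Nat.dvd_gcd h dvd_rfl
      rw [hco] at this
      exact hℓ.one_lt.ne' (Nat.dvd_one.1 this)
  set a := padicValNat ℓ (q ^ t - 1) with ha
  set U := ⌊u⌋₊ + 2 with hU
  obtain ⟨N1, hN1⟩ := aux_eventually ((50 + U) * (a + 1) * t)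
  obtain ⟨N2, hN2⟩ := exists_nat_gt ((q : ℝ) * Real.exp 24 / ε)
  refine ⟨max (N1 + 1) (N2 + 1), fun n hn => ?_⟩
  have hnN1 : N1 ≤ n := by have := le_max_left (N1 + 1) (N2 + 1); omega
  have hnN2 : N2 + 1 ≤ n := (le_max_right _ _).trans hn
  have hn1 : 1 ≤ n := by omega
  set L := Nat.log 2 (2 * n) with hL
  have hlarge : (50 * L + U) * (a + L + 1) ≤ n / t := by
    rw [Nat.le_div_iff_mul_le ht0]
    refine le_trans ?_ (hN1 n hnN1)
    have e1 : 50 * L + U ≤ (50 + U) * (L + 1) := by nlinarith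
    have e2 : a + L + 1 ≤ (a + 1) * (L + 1) := by nlinarith
    calc (50 * L + U) * (a + L + 1) * t ≤ ((50 + U) * (L + 1)) * ((a + 1) * (L + 1)) * t :=
          Nat.mul_le_mul_right _ (Nat.mul_le_mul e1 e2)
      _ = _ := by ring
  have hbad := aux_tail F n (50 * L) (fun μ => IsXn F n μ ∧ padicValRat ℓ (dMu q n μ) <
      (padicValNat ℓ (fallFact ((n : ℝ) / (t : ℝ)) u) : ℤ)) (by
    rintro μ ⟨h1, h2⟩
    refine ⟨h1, ?_⟩
    by_contra hc
    push Not at hc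
    have h3 := aux_val_dMu hodd hq2 hco ht ht0 h1
    have h4 := aux_fall (ℓ := ℓ) (n := n) ht0 hu
    have h5 : ((n / t : ℕ) : ℤ) < auxK μ * ((a + L : ℕ) : ℤ) + ((U * (L + 1) : ℕ) : ℤ) := by
      have : ((padicValNat ℓ (fallFact ((n : ℝ) / t) u) : ℕ) : ℤ) ≤ ((U * (L + 1) : ℕ) : ℤ) := by
        exact_mod_cast h4
      linarith
    have h6 : n / t < auxK μ * (a + L) + U * (L + 1) := by exact_mod_cast h5
    nlinarith)
  have hlow := aux_card_lower F n hn1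
  rw [hFq] at hbad hlow
  have hq0 : (0 : ℝ) < q := by positivity
  have hn0 : (0 : ℝ) < n := by exact_mod_cast hn1
  have hden : (0 : ℝ) < (q : ℝ) ^ (n - 1) := by positivity
  have h32 : (n : ℝ) ^ 25 ≤ (3 / 2 : ℝ) ^ (50 * L) := by
    have e1 : n ≤ 2 ^ L := by
      have := Nat.lt_pow_succ_log_self (b := 2) (by norm_num) (2 * n)
      rw [← hL, pow_succ] at this
      omega
    have e2 : (n : ℝ) ≤ (2 : ℝ) ^ L := by exact_mod_cast e1
    calc (n : ℝ) ^ 25 ≤ ((2 : ℝ) ^ L) ^ 25 := by gcongr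
      _ ≤ (((3 / 2 : ℝ) ^ 2) ^ L) ^ 25 := by gcongr; norm_num
      _ = _ := by rw [← pow_mul, ← pow_mul]; congr 1; ring
  have hexp : Real.exp (24 * (1 + Real.log n)) = Real.exp 24 * (n : ℝ) ^ 24 := by
    rw [mul_add, mul_one, Real.exp_add]
    congr 1
    rw [show (24 : ℝ) * Real.log n = ((24 : ℕ) : ℝ) * Real.log n by norm_num, Real.exp_nat_mul,
      Real.exp_log hn0]
  rw [div_lt_iff₀ (lt_of_lt_of_le hden hlow)]
  have hqn : (q : ℝ) ^ n = q * (q : ℝ) ^ (n - 1) := by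
    rw [← pow_succ']; congr 1; omega
  have hinv : ((3 / 2 : ℝ) ^ (50 * L))⁻¹ ≤ ((n : ℝ) ^ 25)⁻¹ := inv_anti₀ (by positivity) h32
  have hNε : (q : ℝ) * Real.exp 24 < ε * n := by
    rw [div_lt_iff₀ hε] at hN2
    have : (N2 : ℝ) ≤ n := by exact_mod_cast (by omega : N2 ≤ n)
    nlinarith
  calc _ ≤ (q : ℝ) ^ n * Real.exp (24 * (1 + Real.log n)) * ((3 / 2 : ℝ) ^ (50 * L))⁻¹ := hbad
    _ ≤ (q : ℝ) ^ n * Real.exp (24 * (1 + Real.log n)) * ((n : ℝ) ^ 25)⁻¹ := by gcongr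
    _ = (q : ℝ) ^ (n - 1) * (q * Real.exp 24 / n) := by
        rw [hexp, hqn]; field_simp
    _ < (q : ℝ) ^ (n - 1) * ε := by
        apply mul_lt_mul_of_pos_left _ hden
        rw [div_lt_iff₀ hn0]; exact hNε
    _ ≤ ε * _ := by rw [mul_comm]; gcongr
end
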